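/- Let T be a normal rank-one transformation on an infinite σ-finite measure space and let F = I be the unit interval. Then for all sets A and B, each of which is a finite union of levels contained in I, one has (1/a_n(I)) ∑_{k=0}^{n−1} μ(A ∩ T^k B) → μ(A)μ(B) as n → ∞. -/

import Mathlib

open MeasureTheory Filter Set Pointwise

/-- A rank-one cutting-and-stacking transformation of a subset `X ⊆ ℝ` (with Lebesgue
measure), given by columns `C n` consisting of `h n` levels (open intervals) of width `w n`,
with `pos n j` the left endpoint of the level of height `j` in column `C n`; column `C (n+1)`
is obtained from `C n` by cutting into `r n ≥ 2` subcolumns of equal width, adding `s n k`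
spacers above the `k`-th subcolumn, and stacking. -/
structure RankOne where
  X : Set ℝ
  T : ℝ ≃ᵐ ℝ
  r : ℕ → ℕ
  s : ℕ → ℕ → ℕ
  h : ℕ → ℕ
  w : ℕ → ℝ
  pos : ℕ → ℕ → ℝ
  hr : ∀ n, 2 ≤ r n
  h0 : h 0 = 1
  w0 : w 0 = 1
  pos0 : pos 0 0 = 0
  hrec : ∀ n, h (n + 1) = ∑ k ∈ Finset.range (r n), (h n + s n k)
  wrec : ∀ n, w (n + 1) = w n / (r n : ℝ)
  hX : X = ⋃ n, ⋃ j < h n, Set.Ioo (pos n j) (pos n j + w n)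
  disj : ∀ n, ∀ j < h n, ∀ j' < h n, j ≠ j' →
    Disjoint (Set.Ioo (pos n j) (pos n j + w n)) (Set.Ioo (pos n j') (pos n j' + w n))
  stack : ∀ n, ∀ j < h n, ∀ k < r n,
    pos (n + 1) ((∑ i ∈ Finset.range k, (h n + s n i)) + j) = pos n j + (k : ℝ) * w (n + 1)
  Tmap : ∀ n j, j + 1 < h n → ∀ x ∈ Set.Ioo (pos n j) (pos n j + w n),
    T x = x + (pos n (j + 1) - pos n j)
  Tbij : Set.BijOn (⇑T) X X
  Tpres : MeasurePreserving (⇑T) (volume.restrict X) (volume.restrict X)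

namespace RankOne

/-- The level of height `j` in column `C n`. -/
def lvl (S : RankOne) (n j : ℕ) : Set ℝ := Set.Ioo (S.pos n j) (S.pos n j + S.w n)

/-- The measure on the space: Lebesgue measure restricted to `X`. -/
noncomputable def μ (S : RankOne) : Measure ℝ := volume.restrict S.X

/-- The intrinsic weight sequence `u n F = μ(F ∩ TⁿF) / μ(F)²`. -/
noncomputable def u (S : RankOne) (F : Set ℝ) (n : ℕ) : ℝ :=
  (S.μ (F ∩ (⇑S.T)^[n] '' F)).toReal / (S.μ F).toReal ^ 2

/-- `a n F = ∑_{k<n} u k F`. -/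
noncomputable def a (S : RankOne) (F : Set ℝ) (n : ℕ) : ℝ :=
  ∑ k ∈ Finset.range n, S.u F k

/-- `T` is normal if spacers are added above the rightmost subcolumn infinitely often. -/
def Normal (S : RankOne) : Prop := ∀ m, ∃ n, m ≤ n ∧ 0 < S.s n (S.r n - 1)

/-- `T` grows exponentially: `2 s_{n, r_n - 1} ≥ h_{n+1}` for every `n`. -/
def ExpGrowing (S : RankOne) : Prop := ∀ n, S.h (n + 1) ≤ 2 * S.s n (S.r n - 1)

/-- `T` has a bounded number of cuts: `sup r_n < ∞`. -/
def BoundedCuts (S : RankOne) : Prop := ∃ c, ∀ n, S.r n ≤ c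

/-- `H n = {0} ∪ {∑_{k≤i} (h n + s n k) : 0 ≤ i < r n - 1}`. -/
def Hset (S : RankOne) (n : ℕ) : Finset ℕ :=
  insert 0 ((Finset.range (S.r n - 1)).image fun i => ∑ k ∈ Finset.range (i + 1), (S.h n + S.s n k))

/-- The set of heights in column `C N` of the descendants of the level of height `p`
in column `C j`: `D(J, N) = p + H j ⊕ H (j+1) ⊕ ⋯ ⊕ H (N-1)`. -/
def desc (S : RankOne) (j p : ℕ) : ℕ → Finset ℕ
  | 0 => {p}
  | N + 1 => if N < j then {p} else desc S j p N + S.Hset N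

/-- `M m`: the maximal height of a descendant of the unit interval `I` in column `C m`. -/
def M (S : RankOne) (m : ℕ) : ℕ := (S.desc 0 0 m).sup id

/-- The ergodic sum `S_n(1_F)(x) = ∑_{k<n} 1_F(T^k x)`. -/
noncomputable def birkhoff (S : RankOne) (F : Set ℝ) (n : ℕ) (x : ℝ) : ℝ :=
  ∑ k ∈ Finset.range n, Set.indicator F (fun _ => (1 : ℝ)) ((⇑S.T)^[k] x)

/-- `T` is rationally weakly mixing on `F`. -/
def RWMOn (S : RankOne) (F : Set ℝ) : Prop :=
  MeasurableSet F ∧ 0 < S.μ F ∧ S.μ F ≠ ⊤ ∧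
  ∀ A B : Set ℝ, MeasurableSet A → A ⊆ F → MeasurableSet B → B ⊆ F →
    Tendsto (fun n => (S.a F n)⁻¹ *
      ∑ k ∈ Finset.range n,
        |(S.μ (A ∩ (⇑S.T)^[k] '' B)).toReal - (S.μ A).toReal * (S.μ B).toReal * S.u F k|)
      atTop (nhds 0)

/-- `T` is rationally weakly mixing. -/
def RWM (S : RankOne) : Prop := ∃ F, S.RWMOn F

/-- `T` is rationally ergodic: some set `F` of positive finite measure satisfies a
Renyi inequality. -/
def RatErgodic (S : RankOne) : Prop :=
  ∃ (F : Set ℝ) (c : ℝ), MeasurableSet F ∧ 0 < S.μ F ∧ S.μ F ≠ ⊤ ∧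
    ∀ n, ∫ x in F, (S.birkhoff F n x) ^ 2 ∂S.μ ≤ c * (∫ x in F, S.birkhoff F n x ∂S.μ) ^ 2

/-- `T` is spectrally weakly mixing: every bounded measurable eigenfunction is a.e. constant. -/
def SpecWM (S : RankOne) : Prop :=
  ∀ (f : ℝ → ℂ) (z : ℂ), Measurable f → (∃ C, ∀ᵐ x ∂S.μ, ‖f x‖ ≤ C) →
    (∀ᵐ x ∂S.μ, f (S.T x) = z * f x) → ∃ c : ℂ, ∀ᵐ x ∂S.μ, f x = c

/-- `T` is zero-type: `μ(A ∩ TⁿA) → 0` for all `A` of finite measure. -/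
def ZeroType (S : RankOne) : Prop :=
  ∀ A : Set ℝ, MeasurableSet A → S.μ A ≠ ⊤ →
    Tendsto (fun n => S.μ (A ∩ (⇑S.T)^[n] '' A)) atTop (nhds 0)

/-- The `i`-th nonzero element of `H n` (for `i < r n - 1`): `e n i = ∑_{k ≤ i} (h n + s n k)`. -/
def e (S : RankOne) (n i : ℕ) : ℕ := ∑ k ∈ Finset.range (i + 1), (S.h n + S.s n k)

/-- `T` is steep: listing the nonzero elements of `H 0`, then `H 1`, etc., as `t 1, t 2, …`,
each successive element is at least `4` times the previous one. -/
def Steep (S : RankOne) : Prop :=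
  (∀ n i, i + 2 < S.r n → 4 * S.e n i ≤ S.e n (i + 1)) ∧
  (∀ n, 4 * S.e n (S.r n - 2) ≤ S.e (n + 1) 0)

/-- `T` is almost steep. -/
def AlmostSteep (S : RankOne) : Prop :=
  ∀ n, 3 ≤ S.r n ∧ S.s n 0 = 0 ∧ S.s n 1 = 1 ∧
    ∀ i, 2 ≤ i → i ≤ S.r n - 1 →
      4 * (∑ k ∈ Finset.range i, (S.h n + S.s n k)) ≤ ∑ k ∈ Finset.range (i + 1), (S.h n + S.s n k)

/-- `A` is a finite union of levels of `T`. -/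
def FinUnionLevels (S : RankOne) (A : Set ℝ) : Prop :=
  ∃ q : Finset (ℕ × ℕ), (∀ v ∈ q, v.2 < S.h v.1) ∧ A = ⋃ v ∈ q, S.lvl v.1 v.2

end RankOne

/-!
Column `C_N` is a Rokhlin tower whose base `E` has small measure. Once `N` is large, `A`, `B` and
the reference set `F` (namely `I`) are, up to null sets, unions of `|P|`, `|Q|` and `|R|` of its
floors. Moving two floors down to the base only shifts the summation range, which changes the sum
by a bounded amount; hence `∑_{k<n} μ(A ∩ T^k B) = |P| |Q| ∑_{k<n} μ(E ∩ T^k E) + O(1)`. The same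
holds for `F` with the factor `|R|²`, and `|P| |Q| / |R|² = μ(A) μ(B) / μ(F)²`. Finally
`∑_{k<n} μ(F ∩ T^k F)` diverges: at least half of the `|R|²` pairs of floors contribute `μ(E)`
before time `h_N`, in total at least `μ(F)² / (2 μ(E))`, and `μ(E) → 0` as `N → ∞`.
-/

open Topology

lemma abs_sum_range_add_sub_sum_range_le {f : ℕ → ℝ} {c : ℝ} (hf₀ : ∀ k, 0 ≤ f k)
    (hfc : ∀ k, f k ≤ c) (p n : ℕ) :
    |∑ k ∈ Finset.range n, f (k + p) - ∑ k ∈ Finset.range n, f k| ≤ p * c := by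
  have window_bounds (m : ℕ) : 0 ≤ ∑ k ∈ Finset.range p, f (m + k) ∧
      ∑ k ∈ Finset.range p, f (m + k) ≤ p * c :=
    ⟨Finset.sum_nonneg fun k _ ↦ hf₀ _, by
      simpa using Finset.sum_le_card_nsmul (Finset.range p) (fun k ↦ f (m + k)) c fun k _ ↦ hfc _⟩
  have split_first := Finset.sum_range_add f p n
  have split_last := Finset.sum_range_add f n p
  obtain ⟨first_nonneg, first_le⟩ := window_bounds 0
  obtain ⟨last_nonneg, last_le⟩ := window_bounds n
  simp only [zero_add] at first_nonneg first_le
  simp only [add_comm _ p, abs_le] at split_last ⊢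
  constructor <;> linarith

lemma card_sq_mul_le_two_mul_sum_of_le_add_swap {ι : Type*} {s : Finset ι} {f : ι → ι → ℝ} {c : ℝ}
    (hf : ∀ i ∈ s, ∀ j ∈ s, c ≤ f i j + f j i) :
    (s.card : ℝ) ^ 2 * c ≤ 2 * ∑ i ∈ s, ∑ j ∈ s, f i j := by
  calc (s.card : ℝ) ^ 2 * c = ∑ _i ∈ s, ∑ _j ∈ s, c := by
        simp only [Finset.sum_const, nsmul_eq_mul]; ring
    _ ≤ ∑ i ∈ s, ∑ j ∈ s, (f i j + f j i) :=
        Finset.sum_le_sum fun i hi ↦ Finset.sum_le_sum fun j hj ↦ hf i hi j hj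
    _ = 2 * ∑ i ∈ s, ∑ j ∈ s, f i j := by
        simp only [Finset.sum_add_distrib]
        rw [Finset.sum_comm (f := fun i j ↦ f j i), two_mul]

lemma tendsto_div_of_abs_sub_mul_le {ι : Type*} {l : Filter ι} {f g : ι → ℝ} {c C : ℝ}
    (hfg : ∀ n, |f n - c * g n| ≤ C) (hg : Tendsto g l atTop) :
    Tendsto (fun n ↦ f n / g n) l (𝓝 c) := by
  have error_div : Tendsto (fun n ↦ (f n - c * g n) / g n) l (𝓝 0) :=
    tendsto_bdd_div_atTop_nhds_zero (.of_forall fun n ↦ (abs_le.1 (hfg n)).1)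
      (.of_forall fun n ↦ (abs_le.1 (hfg n)).2) hg
  refine (by simpa using error_div.add_const c : Tendsto _ l (𝓝 c)).congr' ?_
  filter_upwards [hg.eventually_ne_atTop 0] with n hn
  field_simp
  ring

lemma ioo_ae_eq_biUnion_ioo {β : Type*} [LinearOrder β] [MeasurableSpace β] {ν : Measure β}
    [NullSingletonClass ν] {f : ℕ → β} (hf : Monotone f) (n : ℕ) :
    Ioo (f 0) (f n) =ᵐ[ν] ⋃ k ∈ Finset.range n, Ioo (f k) (f (k + 1)) := by
  have partition_ioc : ⋃ k ∈ Finset.range n, Ioc (f k) (f (k + 1)) = Ioc (f 0) (f n) := by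
    simpa using hf.biUnion_Ico_Ioc_map_succ 0 n
  have := Finset.eventuallyEq_iUnion (l := ae ν) (Finset.range n)
    fun k _ ↦ Ioo_ae_eq_Ioc (a := f k) (b := f (k + 1))
  rw [partition_ioc] at this
  exact Ioo_ae_eq_Ioc.trans this.symm

section Correlation

variable {α : Type*} [MeasurableSpace α] {μ : Measure α} {T : α → α}

/-- The correlation `μ(A ∩ T^k B)` of two sets at time `k`, as a real number; it is only meaningful
when `A` or `B` has finite measure, since `μ.real` sends `∞` to `0`. -/
noncomputable def correlation (μ : Measure α) (T : α → α) (A B : Set α) (k : ℕ) : ℝ :=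
  μ.real (A ∩ T^[k] '' B)

/-- The partial sum `∑_{k<n} μ(A ∩ T^k B)` of correlations. -/
noncomputable def correlationSum (μ : Measure α) (T : α → α) (A B : Set α) (n : ℕ) : ℝ :=
  ∑ k ∈ Finset.range n, correlation μ T A B k

lemma correlation_nonneg (A B : Set α) (k : ℕ) : 0 ≤ correlation μ T A B k :=
  measureReal_nonneg

lemma correlation_le_measureReal {A : Set α} (hA : μ A ≠ ⊤) (B : Set α) (k : ℕ) :
    correlation μ T A B k ≤ μ.real A :=
  measureReal_mono inter_subset_left hA

lemma correlationSum_monotone (A B : Set α) : Monotone (correlationSum μ T A B) :=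
  monotone_nat_of_le_succ fun n ↦ by
    simpa only [correlationSum, Finset.sum_range_succ, le_add_iff_nonneg_right]
      using correlation_nonneg A B n

lemma measurableEmbedding_iterate (hTe : MeasurableEmbedding T) (k : ℕ) :
    MeasurableEmbedding T^[k] := by
  induction k with
  | zero => exact .id
  | succ k ih => exact ih.comp hTe

lemma measure_image_iterate (hT : MeasurePreserving T μ μ) (hTe : MeasurableEmbedding T) (k : ℕ)
    (E : Set α) : μ (T^[k] '' E) = μ E := by
  rw [← (hT.iterate k).measure_preimage_emb (measurableEmbedding_iterate hTe k),
    preimage_image_eq _ (hTe.injective.iterate k)]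

lemma ae_eq_image_iterate (hT : MeasurePreserving T μ μ) (hTe : MeasurableEmbedding T) (k : ℕ)
    {A B : Set α} (hAB : A =ᵐ[μ] B) : (T^[k] '' A : Set α) =ᵐ[μ] (T^[k] '' B : Set α) := by
  rw [ae_eq_set] at hAB ⊢
  simpa only [← image_sdiff (hTe.injective.iterate k), measure_image_iterate hT hTe] using hAB

lemma correlation_congr_ae (hT : MeasurePreserving T μ μ) (hTe : MeasurableEmbedding T)
    {A A' B B' : Set α} (hA : A =ᵐ[μ] A') (hB : B =ᵐ[μ] B') (k : ℕ) :
    correlation μ T A B k = correlation μ T A' B' k :=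
  measureReal_congr (hA.inter (ae_eq_image_iterate hT hTe k hB))

lemma correlation_image_iterate_add (hT : MeasurePreserving T μ μ) (hTe : MeasurableEmbedding T)
    (A B : Set α) (p q k : ℕ) :
    correlation μ T (T^[p] '' A) (T^[q] '' B) (k + p) = correlation μ T A B (k + q) := by
  have image_eq : T^[k + p] '' (T^[q] '' B) = T^[p] '' (T^[k + q] '' B) := by
    simp only [← image_comp, ← Function.iterate_add]
    rw [show k + p + q = p + (k + q) by ring]
  rw [correlation, image_eq, ← image_inter (hTe.injective.iterate p), measureReal_def,
    measure_image_iterate hT hTe]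
  rfl

lemma abs_correlationSum_image_iterate_sub_le (hT : MeasurePreserving T μ μ)
    (hTe : MeasurableEmbedding T) {A : Set α} (hA : μ A ≠ ⊤) (B : Set α) (p q n : ℕ) :
    |correlationSum μ T (T^[p] '' A) (T^[q] '' B) n - correlationSum μ T A B n| ≤
      (p + q) * μ.real A := by
  have measure_eq := measure_image_iterate hT hTe p A
  have shift_left := abs_sum_range_add_sub_sum_range_le
    (correlation_nonneg (μ := μ) (T := T) (T^[p] '' A) (T^[q] '' B))
    (correlation_le_measureReal (measure_eq ▸ hA) _) p n
  have shift_right := abs_sum_range_add_sub_sum_range_le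
    (correlation_nonneg (μ := μ) (T := T) A B) (correlation_le_measureReal hA B) q n
  simp only [correlation_image_iterate_add hT hTe, measureReal_def, measure_eq] at shift_left
  simp only [abs_le, correlationSum, measureReal_def] at *
  constructor <;> linarith

lemma measureReal_le_correlationSum_image_iterate (hT : MeasurePreserving T μ μ)
    (hTe : MeasurableEmbedding T) (E : Set α) {p q n : ℕ} (hqp : q ≤ p) (hp : p < n) :
    μ.real E ≤ correlationSum μ T (T^[p] '' E) (T^[q] '' E) n := by
  have hit : correlation μ T (T^[p] '' E) (T^[q] '' E) (p - q) = μ.real E := by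
    rw [correlation, ← image_comp, ← Function.iterate_add, Nat.sub_add_cancel hqp, inter_self,
      measureReal_def, measure_image_iterate hT hTe, measureReal_def]
  rw [← hit]
  exact Finset.single_le_sum (f := correlation μ T (T^[p] '' E) (T^[q] '' E))
    (fun k _ ↦ correlation_nonneg _ _ k) (Finset.mem_range.2 (by lia))

end Correlation

section RokhlinTower

variable {α : Type*} [MeasurableSpace α] {μ : Measure α} {T : α → α} {E A B F : Set α} {h : ℕ}
  {P Q : Finset ℕ}

/-- `E` is the base of a Rokhlin tower of height `h`: the floors `E, T E, …, T^{h-1} E` are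
pairwise disjoint. -/
structure IsRokhlinTower (T : α → α) (E : Set α) (h : ℕ) : Prop where
  measurableSet_base : MeasurableSet E
  pairwiseDisjoint : (Finset.range h : Set ℕ).PairwiseDisjoint fun p ↦ T^[p] '' E

/-- `A` is, up to a null set, a union of floors `T^p E` with `p < h`. -/
def IsTowerUnion (μ : Measure α) (T : α → α) (E : Set α) (h : ℕ) (A : Set α) : Prop :=
  ∃ P ⊆ Finset.range h, A =ᵐ[μ] ⋃ p ∈ P, T^[p] '' E

lemma isTowerUnion_floor {p : ℕ} (hp : p < h) : IsTowerUnion μ T E h (T^[p] '' E) :=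
  ⟨{p}, by simpa using hp, by rw [Finset.set_biUnion_singleton]; rfl⟩

lemma IsTowerUnion.congr_ae (hA : IsTowerUnion μ T E h A) (hBA : B =ᵐ[μ] A) :
    IsTowerUnion μ T E h B :=
  let ⟨P, hP, hAP⟩ := hA
  ⟨P, hP, hBA.trans hAP⟩

lemma isTowerUnion_biUnion {ι : Type*} {s : Finset ι} {f : ι → Set α}
    (hf : ∀ i ∈ s, IsTowerUnion μ T E h (f i)) : IsTowerUnion μ T E h (⋃ i ∈ s, f i) := by
  choose! P hP hfP using hf
  refine ⟨s.biUnion P, Finset.biUnion_subset.2 hP, ?_⟩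
  rw [Finset.set_biUnion_biUnion]
  exact Finset.eventuallyEq_iUnion s hfP

lemma IsTowerUnion.trans {E' : Set α} {h' : ℕ} (hA : IsTowerUnion μ T E h A)
    (hE : ∀ p < h, IsTowerUnion μ T E' h' (T^[p] '' E)) : IsTowerUnion μ T E' h' A := by
  obtain ⟨P, hP, hAP⟩ := hA
  exact (isTowerUnion_biUnion fun p hp ↦ hE p (Finset.mem_range.1 (hP hp))).congr_ae hAP

namespace IsRokhlinTower

lemma measurableSet_floor (hE : IsRokhlinTower T E h) (hTe : MeasurableEmbedding T) (p : ℕ) :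
    MeasurableSet (T^[p] '' E) :=
  (measurableEmbedding_iterate hTe p).measurableSet_image' hE.measurableSet_base

lemma measureReal_biUnion_floor (hE : IsRokhlinTower T E h) (hT : MeasurePreserving T μ μ)
    (hTe : MeasurableEmbedding T) (hEfin : μ E ≠ ⊤) (hP : P ⊆ Finset.range h) :
    μ.real (⋃ p ∈ P, T^[p] '' E) = P.card * μ.real E := by
  rw [measureReal_biUnion_finset (hE.pairwiseDisjoint.subset (Finset.coe_subset.2 hP))
    (fun p _ ↦ hE.measurableSet_floor hTe p) fun p _ ↦ by rwa [measure_image_iterate hT hTe]]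
  simp [measureReal_def, measure_image_iterate hT hTe]

lemma correlation_biUnion_floor (hE : IsRokhlinTower T E h) (hT : MeasurePreserving T μ μ)
    (hTe : MeasurableEmbedding T) (hEfin : μ E ≠ ⊤) (hP : P ⊆ Finset.range h)
    (hQ : Q ⊆ Finset.range h) (k : ℕ) :
    correlation μ T (⋃ p ∈ P, T^[p] '' E) (⋃ q ∈ Q, T^[q] '' E) k =
      ∑ p ∈ P, ∑ q ∈ Q, correlation μ T (T^[p] '' E) (T^[q] '' E) k := by
  have image_floor_measurable (q : ℕ) : MeasurableSet (T^[k] '' (T^[q] '' E)) :=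
    (measurableEmbedding_iterate hTe k).measurableSet_image' (hE.measurableSet_floor hTe q)
  have inter_ne_top (p : ℕ) (G : Set α) : μ (T^[p] '' E ∩ G) ≠ ⊤ :=
    measure_ne_top_of_subset inter_subset_left (by rwa [measure_image_iterate hT hTe])
  have disjoint_images : (Q : Set ℕ).PairwiseDisjoint fun q ↦ T^[k] '' (T^[q] '' E) :=
    fun q hq q' hq' hne ↦ (disjoint_image_iff (hTe.injective.iterate k)).2
      (hE.pairwiseDisjoint (hQ hq) (hQ hq') hne)
  unfold correlation
  simp only [image_iUnion₂]
  rw [iUnion₂_inter, measureReal_biUnion_finset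
    ((hE.pairwiseDisjoint.subset (Finset.coe_subset.2 hP)).mono fun p ↦ inter_subset_left)
    (fun p _ ↦ (hE.measurableSet_floor hTe p).inter
      (Q.measurableSet_biUnion fun q _ ↦ image_floor_measurable q))
    fun p _ ↦ inter_ne_top p _]
  refine Finset.sum_congr rfl fun p _ ↦ ?_
  rw [inter_iUnion₂, measureReal_biUnion_finset (disjoint_images.mono fun q ↦ inter_subset_right)
    (fun q _ ↦ (hE.measurableSet_floor hTe p).inter (image_floor_measurable q))
    fun q _ ↦ inter_ne_top p _]

lemma correlationSum_eq_sum_floor (hE : IsRokhlinTower T E h) (hT : MeasurePreserving T μ μ)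
    (hTe : MeasurableEmbedding T) (hEfin : μ E ≠ ⊤) (hP : P ⊆ Finset.range h)
    (hQ : Q ⊆ Finset.range h) (hA : A =ᵐ[μ] ⋃ p ∈ P, T^[p] '' E)
    (hB : B =ᵐ[μ] ⋃ q ∈ Q, T^[q] '' E) (n : ℕ) :
    correlationSum μ T A B n =
      ∑ p ∈ P, ∑ q ∈ Q, correlationSum μ T (T^[p] '' E) (T^[q] '' E) n := by
  unfold correlationSum
  simp only [correlation_congr_ae hT hTe hA hB,
    hE.correlation_biUnion_floor hT hTe hEfin hP hQ]
  rw [Finset.sum_comm]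
  exact Finset.sum_congr rfl fun p _ ↦ Finset.sum_comm

lemma exists_abs_correlationSum_sub_le (hE : IsRokhlinTower T E h) (hT : MeasurePreserving T μ μ)
    (hTe : MeasurableEmbedding T) (hEfin : μ E ≠ ⊤) (hA : IsTowerUnion μ T E h A)
    (hB : IsTowerUnion μ T E h B) :
    ∃ C, ∀ n, |μ.real E ^ 2 * correlationSum μ T A B n -
      μ.real A * μ.real B * correlationSum μ T E E n| ≤ C := by
  obtain ⟨P, hP, hAP⟩ := hA
  obtain ⟨Q, hQ, hBQ⟩ := hB
  refine ⟨μ.real E ^ 2 * ∑ p ∈ P, ∑ q ∈ Q, ((p : ℝ) + q) * μ.real E, fun n ↦ ?_⟩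
  rw [measureReal_congr hAP, measureReal_congr hBQ,
    hE.measureReal_biUnion_floor hT hTe hEfin hP, hE.measureReal_biUnion_floor hT hTe hEfin hQ,
    hE.correlationSum_eq_sum_floor hT hTe hEfin hP hQ hAP hBQ]
  calc _ = |μ.real E ^ 2 * ∑ p ∈ P, ∑ q ∈ Q, (correlationSum μ T (T^[p] '' E) (T^[q] '' E) n -
          correlationSum μ T E E n)| := by
        simp only [Finset.sum_sub_distrib, Finset.sum_const, nsmul_eq_mul]
        ring_nf
    _ ≤ _ := by
        rw [abs_mul, abs_of_nonneg (sq_nonneg _)]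
        gcongr
        refine (Finset.abs_sum_le_sum_abs _ _).trans (Finset.sum_le_sum fun p _ ↦ ?_)
        refine (Finset.abs_sum_le_sum_abs _ _).trans (Finset.sum_le_sum fun q _ ↦ ?_)
        exact abs_correlationSum_image_iterate_sub_le hT hTe hEfin E p q n

lemma tendsto_correlationSum_div (hE : IsRokhlinTower T E h) (hT : MeasurePreserving T μ μ)
    (hTe : MeasurableEmbedding T) (hEfin : μ E ≠ ⊤) (hA : IsTowerUnion μ T E h A)
    (hB : IsTowerUnion μ T E h B) (hF : IsTowerUnion μ T E h F) (hF₀ : μ.real F ≠ 0)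
    (hdiv : Tendsto (correlationSum μ T F F) atTop atTop) :
    Tendsto (fun n ↦ correlationSum μ T A B n / correlationSum μ T F F n) atTop
      (𝓝 (μ.real A * μ.real B / μ.real F ^ 2)) := by
  obtain ⟨C, hC⟩ := hE.exists_abs_correlationSum_sub_le hT hTe hEfin hA hB
  obtain ⟨C', hC'⟩ := hE.exists_abs_correlationSum_sub_le hT hTe hEfin hF hF
  have hE₀ : μ.real E ≠ 0 := by
    obtain ⟨P, hP, hFP⟩ := hF
    rw [measureReal_congr hFP, hE.measureReal_biUnion_floor hT hTe hEfin hP] at hF₀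
    exact right_ne_zero_of_mul hF₀
  set c := μ.real A * μ.real B / μ.real F ^ 2 with hc
  refine tendsto_div_of_abs_sub_mul_le (C := (μ.real E ^ 2)⁻¹ * (C + |c| * C')) (fun n ↦ ?_) hdiv
  have sub_eq : correlationSum μ T A B n - c * correlationSum μ T F F n = (μ.real E ^ 2)⁻¹ *
      ((μ.real E ^ 2 * correlationSum μ T A B n -
          μ.real A * μ.real B * correlationSum μ T E E n) -
        c * (μ.real E ^ 2 * correlationSum μ T F F n -
          μ.real F * μ.real F * correlationSum μ T E E n)) := by
    rw [hc]
    field_simp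
    ring
  rw [sub_eq, abs_mul, abs_of_nonneg (by positivity)]
  gcongr
  refine (abs_sub _ _).trans (add_le_add (hC n) ?_)
  rw [abs_mul]
  gcongr
  exact hC' n

lemma sq_measureReal_le_mul_correlationSum (hE : IsRokhlinTower T E h)
    (hT : MeasurePreserving T μ μ) (hTe : MeasurableEmbedding T) (hEfin : μ E ≠ ⊤)
    (hA : IsTowerUnion μ T E h A) :
    μ.real A ^ 2 ≤ 2 * μ.real E * correlationSum μ T A A h := by
  obtain ⟨P, hP, hAP⟩ := hA
  have pair_bound : ∀ p ∈ P, ∀ q ∈ P, μ.real E ≤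
      correlationSum μ T (T^[p] '' E) (T^[q] '' E) h +
        correlationSum μ T (T^[q] '' E) (T^[p] '' E) h := by
    have sum_nonneg (p q : ℕ) : 0 ≤ correlationSum μ T (T^[p] '' E) (T^[q] '' E) h :=
      Finset.sum_nonneg fun k _ ↦ correlation_nonneg _ _ k
    intro p hp q hq
    rcases le_total q p with hqp | hpq
    · exact (measureReal_le_correlationSum_image_iterate hT hTe E hqp
        (Finset.mem_range.1 (hP hp))).trans (le_add_of_nonneg_right (sum_nonneg q p))
    · exact (measureReal_le_correlationSum_image_iterate hT hTe E hpq
        (Finset.mem_range.1 (hP hq))).trans (le_add_of_nonneg_left (sum_nonneg p q))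
  calc μ.real A ^ 2 = μ.real E * ((P.card : ℝ) ^ 2 * μ.real E) := by
        rw [measureReal_congr hAP, hE.measureReal_biUnion_floor hT hTe hEfin hP]
        ring
    _ ≤ μ.real E * (2 * correlationSum μ T A A h) := by
        rw [hE.correlationSum_eq_sum_floor hT hTe hEfin hP hP hAP hAP]
        refine mul_le_mul_of_nonneg_left ?_ measureReal_nonneg
        exact card_sq_mul_le_two_mul_sum_of_le_add_swap pair_bound
    _ = 2 * μ.real E * correlationSum μ T A A h := by ring

end IsRokhlinTower

lemma tendsto_correlationSum_atTop {E : ℕ → Set α} {h : ℕ → ℕ}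
    (hE : ∀ N, IsRokhlinTower T (E N) (h N)) (hT : MeasurePreserving T μ μ)
    (hTe : MeasurableEmbedding T) (hEfin : ∀ N, μ (E N) ≠ ⊤)
    (hE₀ : Tendsto (fun N ↦ μ.real (E N)) atTop (𝓝 0))
    (hA : ∀ᶠ N in atTop, IsTowerUnion μ T (E N) (h N) A) (hA₀ : μ.real A ≠ 0) :
    Tendsto (correlationSum μ T A A) atTop atTop := by
  refine tendsto_atTop_atTop_of_monotone (correlationSum_monotone A A) fun b ↦ ?_
  have small : ∀ᶠ N in atTop, 2 * μ.real (E N) * b < μ.real A ^ 2 := by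
    refine Tendsto.eventually_lt_const (v := 0) (by positivity) ?_
    simpa using (hE₀.const_mul 2).mul_const b
  obtain ⟨N, hNb, hNA⟩ := (small.and hA).exists
  exact ⟨h N, (lt_of_mul_lt_mul_left
    (hNb.trans_le ((hE N).sq_measureReal_le_mul_correlationSum hT hTe (hEfin N) hNA))
    (by positivity)).le⟩

end RokhlinTower

namespace RankOne

variable (S : RankOne) {n N j k : ℕ} {A F : Set ℝ}

/-- The height in column `C (n+1)` of the bottom of the `k`-th subcolumn of `C n`. -/
def subcolumnBase (n k : ℕ) : ℕ := ∑ i ∈ Finset.range k, (S.h n + S.s n i)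

lemma w_pos (n : ℕ) : 0 < S.w n := by
  induction n with
  | zero => simp [S.w0]
  | succ n ih =>
    rw [S.wrec]
    exact div_pos ih (by exact_mod_cast two_pos.trans_le (S.hr n))

lemma h_pos (n : ℕ) : 0 < S.h n := by
  induction n with
  | zero => simp [S.h0]
  | succ n ih =>
    rw [S.hrec]
    exact Finset.sum_pos (fun k _ ↦ Nat.add_pos_left ih _)
      (Finset.nonempty_range_iff.2 (two_pos.trans_le (S.hr n)).ne')

lemma w_eq_r_mul_w_succ (n : ℕ) : S.w n = S.r n * S.w (n + 1) := by
  rw [S.wrec, mul_div_cancel₀]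
  exact_mod_cast (two_pos.trans_le (S.hr n)).ne'

lemma w_le_half_pow (n : ℕ) : S.w n ≤ (1 / 2) ^ n := by
  induction n with
  | zero => simp [S.w0]
  | succ n ih =>
    have two_le_r : (2 : ℝ) ≤ S.r n := by exact_mod_cast S.hr n
    have two_mul_w_le := mul_le_mul_of_nonneg_right two_le_r (S.w_pos (n + 1)).le
    rw [← S.w_eq_r_mul_w_succ] at two_mul_w_le
    rw [pow_succ]
    linarith

lemma tendsto_w : Tendsto S.w atTop (𝓝 0) :=
  squeeze_zero (fun n ↦ (S.w_pos n).le) S.w_le_half_pow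
    (tendsto_pow_atTop_nhds_zero_of_lt_one (by norm_num) (by norm_num))

lemma measurePreserving_T : MeasurePreserving S.T S.μ S.μ := S.Tpres

instance : NullSingletonClass S.μ := inferInstanceAs (NullSingletonClass (volume.restrict S.X))

lemma isOpen_lvl (n j : ℕ) : IsOpen (S.lvl n j) := isOpen_Ioo

lemma lvl_subset_X (hj : j < S.h n) : S.lvl n j ⊆ S.X := by
  rw [S.hX]
  exact subset_iUnion_of_subset n (subset_iUnion₂_of_subset j hj subset_rfl)

lemma μ_lvl (hj : j < S.h n) : S.μ (S.lvl n j) = ENNReal.ofReal (S.w n) := by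
  rw [μ, Measure.restrict_eq_self _ (S.lvl_subset_X hj), lvl, Real.volume_Ioo, add_sub_cancel_left]

lemma μ_lvl_ne_top (hj : j < S.h n) : S.μ (S.lvl n j) ≠ ⊤ :=
  S.μ_lvl hj ▸ ENNReal.ofReal_ne_top

lemma image_T_lvl (hj : j + 1 < S.h n) : S.T '' S.lvl n j = S.lvl n (j + 1) := by
  rw [lvl, image_congr (S.Tmap n j hj), image_add_const_Ioo, lvl]
  congr 1 <;> ring

lemma image_iterate_T_lvl_zero (hj : j < S.h n) : S.T^[j] '' S.lvl n 0 = S.lvl n j := by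
  induction j with
  | zero => simp
  | succ j ih => rw [Function.iterate_succ', image_comp, ih (by lia), S.image_T_lvl hj]

lemma isRokhlinTower (n : ℕ) : IsRokhlinTower S.T (S.lvl n 0) (S.h n) where
  measurableSet_base := measurableSet_Ioo
  pairwiseDisjoint p hp q hq hpq := by
    have hp : p < S.h n := by simpa using hp
    have hq : q < S.h n := by simpa using hq
    simp only [Function.onFun, S.image_iterate_T_lvl_zero hp, S.image_iterate_T_lvl_zero hq]
    exact S.disj n p hp q hq hpq

lemma subcolumnBase_add_lt_h_succ (hj : j < S.h n) (hk : k < S.r n) :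
    S.subcolumnBase n k + j < S.h (n + 1) :=
  calc S.subcolumnBase n k + j < S.subcolumnBase n (k + 1) := by
        rw [subcolumnBase, subcolumnBase, Finset.sum_range_succ]
        lia
    _ ≤ S.h (n + 1) := by
        rw [S.hrec]
        exact Finset.sum_le_sum_of_subset (Finset.range_mono hk)

lemma lvl_succ_subcolumnBase_add (hj : j < S.h n) (hk : k < S.r n) :
    S.lvl (n + 1) (S.subcolumnBase n k + j) =
      Ioo (S.pos n j + k * S.w (n + 1)) (S.pos n j + (k + 1 : ℕ) * S.w (n + 1)) := by
  rw [lvl, subcolumnBase, S.stack n j hj k hk]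
  push_cast
  ring_nf

lemma lvl_ae_eq_biUnion_lvl_succ (hj : j < S.h n) :
    S.lvl n j =ᵐ[S.μ]
      ⋃ k ∈ Finset.range (S.r n), S.lvl (n + 1) (S.subcolumnBase n k + j) := by
  have cuts_monotone : Monotone fun k : ℕ ↦ S.pos n j + k * S.w (n + 1) := fun k l hkl ↦ by
    have := (S.w_pos (n + 1)).le
    dsimp only
    gcongr
  have partition := ioo_ae_eq_biUnion_ioo (ν := S.μ) cuts_monotone (S.r n)
  rw [Nat.cast_zero, zero_mul, add_zero, ← S.w_eq_r_mul_w_succ] at partition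
  have pieces_eq := iUnion₂_congr fun k hk ↦
    S.lvl_succ_subcolumnBase_add (k := k) hj (Finset.mem_range.1 hk)
  exact pieces_eq ▸ partition

/-- `A` is, up to a null set, a union of levels of column `C N`. -/
abbrev IsColumnUnion (N : ℕ) (A : Set ℝ) : Prop :=
  IsTowerUnion S.μ S.T (S.lvl N 0) (S.h N) A

lemma isColumnUnion_lvl (hj : j < S.h n) : S.IsColumnUnion n (S.lvl n j) := by
  rw [← S.image_iterate_T_lvl_zero hj]
  exact isTowerUnion_floor hj

lemma isColumnUnion_succ_lvl (hj : j < S.h n) : S.IsColumnUnion (n + 1) (S.lvl n j) :=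
  (isTowerUnion_biUnion fun _ hk ↦ S.isColumnUnion_lvl
    (S.subcolumnBase_add_lt_h_succ hj (Finset.mem_range.1 hk))).congr_ae
      (S.lvl_ae_eq_biUnion_lvl_succ hj)

lemma isColumnUnion_lvl_of_le (hnN : n ≤ N) (hj : j < S.h n) : S.IsColumnUnion N (S.lvl n j) := by
  induction N, hnN using Nat.le_induction with
  | base => exact S.isColumnUnion_lvl hj
  | succ N _ ih =>
    refine ih.trans fun p hp ↦ ?_
    rw [S.image_iterate_T_lvl_zero hp]
    exact S.isColumnUnion_succ_lvl hp

variable {S}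

lemma FinUnionLevels.eventually_isColumnUnion (hA : S.FinUnionLevels A) :
    ∀ᶠ N in atTop, S.IsColumnUnion N A := by
  obtain ⟨q, hq, rfl⟩ := hA
  filter_upwards [eventually_ge_atTop (q.sup Prod.fst)] with N hN
  exact isTowerUnion_biUnion fun v hv ↦
    S.isColumnUnion_lvl_of_le ((Finset.le_sup (f := Prod.fst) hv).trans hN) (hq v hv)

lemma FinUnionLevels.μ_real_ne_zero (hF : S.FinUnionLevels F) (hFne : F.Nonempty) :
    S.μ.real F ≠ 0 := by
  obtain ⟨q, hq, rfl⟩ := hF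
  have isOpen_F : IsOpen (⋃ v ∈ q, S.lvl v.1 v.2) :=
    isOpen_biUnion fun v _ ↦ S.isOpen_lvl v.1 v.2
  refine ENNReal.toReal_ne_zero.2 ⟨?_, ?_⟩
  · rw [μ, Measure.restrict_eq_self _ (iUnion₂_subset fun v hv ↦ S.lvl_subset_X (hq v hv))]
    exact (isOpen_F.measure_pos volume hFne).ne'
  · exact (measure_biUnion_lt_top q.finite_toSet fun v hv ↦
      (S.μ_lvl_ne_top (hq v hv)).lt_top).ne

lemma FinUnionLevels.tendsto_correlationSum (hF : S.FinUnionLevels F) (hFne : F.Nonempty) :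
    Tendsto (correlationSum S.μ S.T F F) atTop atTop := by
  have base_tendsto : Tendsto (fun N ↦ S.μ.real (S.lvl N 0)) atTop (𝓝 0) := by
    simpa only [measureReal_def, S.μ_lvl (S.h_pos _), ENNReal.toReal_ofReal (S.w_pos _).le]
      using S.tendsto_w
  exact tendsto_correlationSum_atTop S.isRokhlinTower S.measurePreserving_T
    S.T.measurableEmbedding (fun N ↦ S.μ_lvl_ne_top (S.h_pos N)) base_tendsto
    hF.eventually_isColumnUnion (hF.μ_real_ne_zero hFne)

variable (S)

lemma finUnionLevels_lvl (hj : j < S.h n) : S.FinUnionLevels (S.lvl n j) :=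
  ⟨{(n, j)}, by simpa using hj, by simp⟩

lemma a_eq_correlationSum_div (F : Set ℝ) (n : ℕ) :
    S.a F n = correlationSum S.μ S.T F F n / S.μ.real F ^ 2 :=
  (Finset.sum_div _ _ _).symm

end RankOne

theorem statement1_general (S : RankOne) (A B F : Set ℝ) (hA : S.FinUnionLevels A)
    (hB : S.FinUnionLevels B) (hF : S.FinUnionLevels F) (hFne : F.Nonempty) :
    Tendsto (fun n => (S.a F n)⁻¹ *
        ∑ k ∈ Finset.range n, (S.μ (A ∩ (⇑S.T)^[k] '' B)).toReal)
      atTop (nhds ((S.μ A).toReal * (S.μ B).toReal)) := by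
  have hF₀ : S.μ.real F ≠ 0 := hF.μ_real_ne_zero hFne
  obtain ⟨N, hAN, hBN, hFN⟩ := (hA.eventually_isColumnUnion.and
    (hB.eventually_isColumnUnion.and hF.eventually_isColumnUnion)).exists
  have ratio := ((S.isRokhlinTower N).tendsto_correlationSum_div S.measurePreserving_T
    S.T.measurableEmbedding (S.μ_lvl_ne_top (S.h_pos N)) hAN hBN hFN hF₀
    (hF.tendsto_correlationSum hFne)).const_mul (S.μ.real F ^ 2)
  rw [mul_div_cancel₀ _ (pow_ne_zero 2 hF₀)] at ratio
  refine ratio.congr fun n ↦ ?_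
  rw [S.a_eq_correlationSum_div, inv_div, mul_div_assoc', div_mul_eq_mul_div]
  rfl

/-- A normal rank-one transformation on an infinite measure space satisfies
`(1/a_n(I)) ∑_{k<n} μ(A ∩ T^k B) → μ(A)μ(B)` for all `A`, `B` finite unions of levels
contained in the unit interval `I`. -/
theorem statement1 (S : RankOne) (hnorm : S.Normal) (hinf : volume S.X = ⊤)
    (A B : Set ℝ) (hA : S.FinUnionLevels A) (hB : S.FinUnionLevels B)
    (hAI : A ⊆ S.lvl 0 0) (hBI : B ⊆ S.lvl 0 0) :
    Tendsto (fun n => (S.a (S.lvl 0 0) n)⁻¹ *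
        ∑ k ∈ Finset.range n, (S.μ (A ∩ (⇑S.T)^[k] '' B)).toReal)
      atTop (nhds ((S.μ A).toReal * (S.μ B).toReal)) :=
  statement1_general S A B (S.lvl 0 0) hA hB (S.finUnionLevels_lvl (S.h_pos 0))
    (nonempty_Ioo.2 (lt_add_of_pos_right _ (S.w_pos 0)))
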